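/- Let q be a power of a prime p, let k be a positive integer with k ≡ 0 (mod 4) and gcd(k/2, q−1) = 1, let a ∈ F_q^*, and let D = {x ∈ F_{q^k} : Tr_{q^2/q}(x^{(q^k−1)/(q^2−1)}) + a = 0}. Then #{b ∈ F_{q^k}^* : w(c_b) = (q^k − q^{k/2})/(q+1)} = (q^k − 1)/(q+1) and #{b ∈ F_{q^k}^* : w(c_b) = (q^k + q^{k/2 − 1})/(q+1)} = q(q^k − 1)/(q+1); in particular every nonzero codeword of C_D has one of these two weights, C_D has length q(q^k−1)/(q²−1), dimension k, and minimum distance (q^k − q^{k/2})/(q+1). -/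

import Mathlib

/-!
Put `M = (q ^ k - 1) / (q + 1)`, `h = k / 2`, and let `N` be the norm to the field with `q ^ 2`
elements. Scaling `x` by a unit `u` of `F_q` scales `Tr (N x)` by `u ^ h`, and `u ↦ u ^ h` permutes
the units because `h` is prime to `q - 1`. So all nonzero fibres of `Tr ∘ N` meet a set stable under
scaling equally often, and the weight of `b` only depends on how many `x` with `Tr (N x) = 0`
satisfy `Tr (b * x) ≠ 0`. Those `x` are `0` and the solutions of `x ^ M = -1`, a coset of the
`(q + 1)`-st powers, which turns the count into the sums `S b = ∑ x, ψ (Tr (b * x ^ (q + 1)))`.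

Multiplying `S b` by `S (-b) = S b` leaves a sum over the radical of `x ↦ Tr (b * x ^ (q + 1))`, on
which this form vanishes; the radical has `1` or `q ^ 2` elements, so `S b` is `q ^ h` or
`q ^ (h + 1)` up to sign. Finally `S b ≡ 1` modulo `q + 1` in the ring of algebraic integers, hence
`S b = (-q) ^ h` or `S b = (-q) ^ (h + 1)`.
-/

open Finset

theorem range_powMonoidHom_eq_ker {G : Type*} [CommGroup G] [IsCyclic G] [Finite G] {d m : ℕ}
    (hG : Nat.card G = d * m) :
    (powMonoidHom d : G →* G).range = (powMonoidHom m : G →* G).ker := by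
  have hd : 0 < d := Nat.pos_of_mul_pos_right (hG ▸ Nat.card_pos)
  refine Subgroup.eq_of_le_of_card_ge ?_ ?_
  · rintro _ ⟨x, rfl⟩
    simp only [MonoidHom.mem_ker, powMonoidHom_apply, ← pow_mul, ← hG, pow_card_eq_one']
  · rw [IsCyclic.card_powMonoidHom_ker, IsCyclic.card_powMonoidHom_range, hG,
      Nat.gcd_mul_right_left, Nat.gcd_mul_left_left, Nat.mul_div_cancel_left m hd]

theorem card_pow_eq_of_isCyclic {G : Type*} [CommGroup G] [IsCyclic G] [Fintype G] [DecidableEq G]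
    {d m : ℕ} (hG : Nat.card G = d * m) (g : G) :
    #{x : G | x ^ d = g} = if g ^ m = 1 then d else 0 := by
  have hrange : g ∈ (powMonoidHom d : G →* G).range ↔ g ^ m = 1 := by
    rw [range_powMonoidHom_eq_ker hG, MonoidHom.mem_ker, powMonoidHom_apply]
  split_ifs with hg
  · have hone : #{x : G | x ^ d = 1} = d := by
      have hker := IsCyclic.card_powMonoidHom_ker G d
      rw [hG, Nat.gcd_mul_right_left] at hker
      rw [Nat.card_eq_fintype_card, Fintype.card_subtype] at hker
      simpa only [MonoidHom.mem_ker, powMonoidHom_apply] using hker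
    exact (MonoidHom.card_fiber_eq_of_mem_range (powMonoidHom d : G →* G) (hrange.2 hg)
      (one_mem (powMonoidHom d : G →* G).range)).trans hone
  · exact card_eq_zero.2 (filter_eq_empty_iff.2 fun x _ hx => hg (hrange.1 ⟨x, hx⟩))

section FiniteField

variable {F : Type*} [Field F] [Fintype F] [DecidableEq F] {d m : ℕ}

theorem card_pow_eq (hF : Fintype.card F = d * m + 1) {z : F} (hz : z ≠ 0) :
    #{x : F | x ^ d = z} = if z ^ m = 1 then d else 0 := by
  have hunits : Nat.card Fˣ = d * m := by
    rw [Nat.card_units, Nat.card_eq_fintype_card, hF, Nat.add_sub_cancel]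
  have hd : d ≠ 0 := by
    rintro rfl
    exact (hunits.symm ▸ Nat.card_pos : 0 < 0 * m).ne' (zero_mul m)
  have hcard := card_pow_eq_of_isCyclic hunits (Units.mk0 z hz)
  simp only [Units.ext_iff, Units.val_pow_eq_pow_val, Units.val_mk0, Units.val_one] at hcard
  rw [← hcard]
  symm
  refine card_bij (fun u _ => (u : F)) ?_ ?_ ?_
  · simp
  · exact fun u _ v _ huv => Units.ext huv
  · intro x hx
    have hx' : x ^ d = z := (mem_filter.1 hx).2
    have hx0 : x ≠ 0 := by
      rintro rfl
      exact hz (hx' ▸ zero_pow hd)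
    exact ⟨Units.mk0 x hx0, by simpa using hx', rfl⟩

theorem sum_comp_mul_pow {A : Type*} [AddCommMonoid A] (hF : Fintype.card F = d * m + 1)
    {c : F} (hc : c ≠ 0) (f : F → A) :
    ∑ x, f (c * x ^ d) = f 0 + d • ∑ z with z ^ m = c ^ m, f z := by
  have hdm : d * m ≠ 0 := fun h => by
    simpa [hF, h] using (Fintype.one_lt_card (α := F)).ne'
  have hfibre (z : F) (hz : z ≠ 0) :
      #{x | c * x ^ d = z} = if z ^ m = c ^ m then d else 0 := by
    simp_rw [← eq_inv_mul_iff_mul_eq₀ hc]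
    rw [card_pow_eq hF (mul_ne_zero (inv_ne_zero hc) hz)]
    simp_rw [mul_pow, inv_pow, inv_mul_eq_one₀ (pow_ne_zero m hc), eq_comm]
  have hzero : ({x | c * x ^ d = 0} : Finset F) = {0} := by
    ext x
    simp [hc, left_ne_zero_of_mul hdm]
  have hm0 : (0 : F) ^ m ≠ c ^ m := by
    rw [zero_pow (right_ne_zero_of_mul hdm)]
    exact (pow_ne_zero m hc).symm
  rw [← sum_fiberwise' univ (fun x => c * x ^ d), ← add_sum_erase _ _ (mem_univ 0), sum_const,
    hzero, card_singleton, one_smul, smul_sum, sum_filter, ← add_sum_erase _ _ (mem_univ (0 : F)),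
    if_neg hm0, zero_add]
  congr 1
  refine sum_congr rfl fun z hz => ?_
  rw [sum_const, hfibre z (ne_of_mem_erase hz)]
  split_ifs <;> simp

end FiniteField

section TraceCharacter

variable {K L R : Type*} [Field K] [Field L] [Algebra K L]

section Frobenius

variable [Fintype K]

variable (K L) in
theorem neg_one_pow_card : (-1 : L) ^ Fintype.card K = -1 := by
  simpa using congrArg (algebraMap K L) (FiniteField.pow_card (-1))

variable [Finite L]

theorem trace_pow_card (x : L) :
    Algebra.trace K L (x ^ Fintype.card K) = Algebra.trace K L x := by
  have hfrob := Algebra.trace_eq_of_algEquiv (FiniteField.frobeniusAlgEquivOfAlgebraic K L) x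
  rwa [FiniteField.coe_frobeniusAlgEquivOfAlgebraic] at hfrob

theorem trace_eq_zero_of_pow_card_eq_neg (hrank : Even (Module.finrank K L)) {z : L}
    (hz : z ^ Fintype.card K = -z) : Algebra.trace K L z = 0 := by
  have hconj (i : ℕ) : z ^ Fintype.card K ^ i = (-1) ^ i * z := by
    induction i with
    | zero => simp
    | succ i ih =>
      rw [pow_succ, pow_mul, ih, mul_pow, pow_right_comm, neg_one_pow_card K L, hz, pow_succ]
      ring
  refine (algebraMap K L).injective ?_
  rw [FiniteField.algebraMap_trace_eq_sum_pow, Nat.card_eq_fintype_card, map_zero]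
  simp_rw [hconj]
  rw [← sum_mul, neg_one_geom_sum, if_pos hrank, zero_mul]

theorem trace_mul_pow_eq_zero_of_radical {q : ℕ} (hK : Fintype.card K = q)
    (hrank : Even (Module.finrank K L)) {b u : L} (hu : b * u + b ^ q * u ^ q ^ 2 = 0) :
    Algebra.trace K L (b * u ^ (q + 1)) = 0 := by
  subst hK
  refine trace_eq_zero_of_pow_card_eq_neg hrank (eq_neg_of_add_eq_zero_right ?_)
  linear_combination u ^ Fintype.card K * hu

end Frobenius

theorem isPrimitive_comp_trace [Finite L] [CommMonoid R] {ψ : AddChar K R} (hψ : ψ.IsPrimitive) :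
    (ψ.compAddMonoidHom (Algebra.trace K L : L →+ K)).IsPrimitive := by
  obtain ⟨x, hx⟩ := AddChar.ne_one_iff.1 (AddChar.mulShift_one ψ ▸ hψ one_ne_zero)
  obtain ⟨y, rfl⟩ := Algebra.trace_surjective K L x
  exact .of_ne_one (AddChar.ne_one_iff.2 ⟨y, hx⟩)

theorem sum_trace_mul [Fintype L] [DecidableEq L] [CommRing R] [IsDomain R] {ψ : AddChar K R}
    (hψ : ψ.IsPrimitive) (c : L) :
    ∑ x, ψ (Algebra.trace K L (x * c)) = if c = 0 then (Fintype.card L : R) else 0 :=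
  (AddChar.sum_mulShift c (isPrimitive_comp_trace hψ)).trans (by push_cast; rfl)

end TraceCharacter

theorem eq_add_one_mul_sub_one_mul {N q n : ℕ} (hN : N = (q ^ 2 - 1) * n + 1) :
    N = (q + 1) * ((q - 1) * n) + 1 := by
  rw [hN, ← mul_assoc, ← Nat.sq_sub_sq, one_pow]

section RootsOfUnity

variable {L : Type*} [Field L] [Fintype L] {q n : ℕ}

theorem sub_one_mul_ne_zero (hn : Fintype.card L = (q ^ 2 - 1) * n + 1) :
    (q - 1) * n ≠ 0 := by
  intro hzero
  have hL := Fintype.one_lt_card (α := L)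
  rw [eq_add_one_mul_sub_one_mul hn, hzero] at hL
  omega

theorem card_pow_eq_neg_one_pow {K : Type*} [Field K] [Fintype K] [Algebra K L] [DecidableEq L]
    (hK : Fintype.card K = q) (hn : Fintype.card L = (q ^ 2 - 1) * n + 1) (i : ℕ) :
    #{x : L | x ^ ((q - 1) * n) = (-1) ^ i} = (q - 1) * n := by
  have hM : Fintype.card L = (q - 1) * n * (q + 1) + 1 := by
    rw [eq_add_one_mul_sub_one_mul hn, mul_comm (q + 1)]
  have hone : ((-1 : L) ^ i) ^ (q + 1) = 1 := by
    rw [pow_right_comm, pow_succ, ← hK, neg_one_pow_card K L, neg_one_mul, neg_neg, one_pow]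
  rw [card_pow_eq hM (pow_ne_zero i (neg_ne_zero.2 one_ne_zero)), if_pos hone]

end RootsOfUnity

section HermitianSum

variable {K L R : Type*} [Field K] [Field L] [Fintype L] [Algebra K L] [CommRing R]

/-- The character sum `∑ x, ψ (Tr (b * x ^ (q + 1)))` attached to the Hermitian-type form
`x ↦ b * x ^ (q + 1)` on `L`; the parameter `q` is always the cardinality of `K`. -/
noncomputable def hermitianSum (ψ : AddChar K R) (q : ℕ) (b : L) : R :=
  ∑ x, ψ (Algebra.trace K L (b * x ^ (q + 1)))

variable {ψ : AddChar K R} {q n : ℕ}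

theorem hermitianSum_eq [DecidableEq L] {M : ℕ} (hL : Fintype.card L = (q + 1) * M + 1) {b : L}
    (hb : b ≠ 0) :
    hermitianSum ψ q b = 1 + (q + 1) * ∑ z with z ^ M = b ^ M, ψ (Algebra.trace K L z) := by
  rw [hermitianSum, sum_comp_mul_pow hL hb (fun z => ψ (Algebra.trace K L z)), map_zero,
    AddChar.map_zero_eq_one, nsmul_eq_mul, Nat.cast_add, Nat.cast_one]

theorem hermitianSum_algebraMap_mul [Fintype K] (hK : Fintype.card K = q)
    (hn : Fintype.card L = (q ^ 2 - 1) * n + 1) {c : K} (hc : c ≠ 0) {b : L} (hb : b ≠ 0) :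
    hermitianSum ψ q (algebraMap K L c * b) = hermitianSum ψ q b := by
  classical
  have hM := eq_add_one_mul_sub_one_mul hn
  have hpow : (algebraMap K L c * b) ^ ((q - 1) * n) = b ^ ((q - 1) * n) := by
    rw [mul_pow, pow_mul, ← map_pow, ← hK, FiniteField.pow_card_sub_one_eq_one c hc, map_one,
      one_pow, one_mul]
  rw [hermitianSum_eq hM (mul_ne_zero (map_ne_zero _ |>.2 hc) hb), hermitianSum_eq hM hb, hpow]

variable [DecidableEq L]

theorem hermitianSum_mul_hermitianSum_neg [Fintype K] [IsDomain R] (hψ : ψ.IsPrimitive)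
    (hK : Fintype.card K = q) (b : L) :
    hermitianSum ψ q b * hermitianSum ψ q (-b) =
      Fintype.card L *
        ∑ u with b * u + b ^ q * u ^ q ^ 2 = 0, ψ (Algebra.trace K L (b * u ^ (q + 1))) := by
  subst hK
  set q := Fintype.card K
  let φ : L ≃ₐ[K] L := FiniteField.frobeniusAlgEquivOfAlgebraic K L
  have hφ (x : L) : φ x = x ^ q := congr_fun (FiniteField.coe_frobeniusAlgEquivOfAlgebraic K L) x
  have hpolar (x u : L) :
      Algebra.trace K L (b * (x + u) ^ (q + 1)) + Algebra.trace K L (-b * x ^ (q + 1)) =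
        Algebra.trace K L (b * u ^ (q + 1)) +
          Algebra.trace K L (x ^ q * (b * u + b ^ q * u ^ q ^ 2)) := by
    have hadd : (x + u) ^ q = x ^ q + u ^ q := by simp only [← hφ, map_add]
    have hfrob : Algebra.trace K L (x ^ q * (b ^ q * u ^ q ^ 2)) =
        Algebra.trace K L (x * b * u ^ q) := by
      rw [← trace_pow_card (x * b * u ^ q)]
      congr 1
      ring
    rw [mul_add, map_add, hfrob, ← map_add, ← map_add, ← map_add, pow_succ, hadd]
    congr 1
    ring
  calc hermitianSum ψ q b * hermitianSum ψ q (-b)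
      = ∑ x, ∑ u, ψ (Algebra.trace K L (b * (x + u) ^ (q + 1))) *
          ψ (Algebra.trace K L (-b * x ^ (q + 1))) := by
        rw [hermitianSum, hermitianSum, sum_mul_sum, sum_comm]
        exact sum_congr rfl fun x _ => (Fintype.sum_equiv (Equiv.addLeft x) _ (fun y =>
          ψ (Algebra.trace K L (b * y ^ (q + 1))) * ψ (Algebra.trace K L (-b * x ^ (q + 1))))
          fun _ => rfl).symm
    _ = ∑ u, ψ (Algebra.trace K L (b * u ^ (q + 1))) *
          ∑ x, ψ (Algebra.trace K L (x ^ q * (b * u + b ^ q * u ^ q ^ 2))) := by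
        simp only [← AddChar.map_add_eq_mul, hpolar, mul_sum]
        exact sum_comm
    _ = ∑ u, ψ (Algebra.trace K L (b * u ^ (q + 1))) *
          if b * u + b ^ q * u ^ q ^ 2 = 0 then (Fintype.card L : R) else 0 := by
        refine sum_congr rfl fun u _ => ?_
        rw [← sum_trace_mul hψ]
        exact congrArg _ (Fintype.sum_equiv φ.toEquiv _ _ fun x => by simp [hφ])
    _ = _ := by
        simp only [mul_ite, mul_zero, sum_ite, sum_const_zero, add_zero, mul_sum]
        exact sum_congr rfl fun u _ => mul_comm _ _

theorem card_hermitian_radical (hq : 1 < q) (hn : Fintype.card L = (q ^ 2 - 1) * n + 1) {b : L}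
    (hb : b ≠ 0) :
    #{u : L | b * u + b ^ q * u ^ q ^ 2 = 0} =
      if b ^ ((q - 1) * n) = (-1) ^ n then q ^ 2 else 1 := by
  have hpos : 0 < q ^ 2 - 1 := Nat.sub_pos_of_lt (Nat.one_lt_pow two_ne_zero hq)
  have hinv : -(b ^ (q - 1))⁻¹ ≠ 0 := neg_ne_zero.2 (inv_ne_zero (pow_ne_zero _ hb))
  have hunit : (-(b ^ (q - 1))⁻¹) ^ n = 1 ↔ b ^ ((q - 1) * n) = (-1) ^ n := by
    rw [neg_pow, inv_pow, ← pow_mul, ← div_eq_mul_inv,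
      div_eq_one_iff_eq (pow_ne_zero _ hb), eq_comm]
  have hroot {u : L} (hu : u ≠ 0) :
      b * u + b ^ q * u ^ q ^ 2 = 0 ↔ u ^ (q ^ 2 - 1) = -(b ^ (q - 1))⁻¹ := by
    have hfactor : b * u + b ^ q * u ^ q ^ 2 = b * u * (1 + b ^ (q - 1) * u ^ (q ^ 2 - 1)) := by
      rw [← pow_sub_one_mul (by omega : q ≠ 0) b, ← pow_sub_one_mul (by omega : q ^ 2 ≠ 0) u]
      ring
    rw [hfactor, mul_eq_zero, or_iff_right (mul_ne_zero hb hu), add_eq_zero_iff_neg_eq,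
      ← inv_mul_eq_iff_eq_mul₀ (pow_ne_zero _ hb), mul_neg_one, eq_comm]
  have hsplit : ({u : L | b * u + b ^ q * u ^ q ^ 2 = 0} : Finset L) =
      insert 0 ({u : L | u ^ (q ^ 2 - 1) = -(b ^ (q - 1))⁻¹} : Finset L) := by
    ext u
    rcases eq_or_ne u 0 with rfl | hu
    · simp [Nat.ne_zero_of_lt hq]
    · simp [hu, hroot hu]
  have hnotMem : (0 : L) ∉ ({u : L | u ^ (q ^ 2 - 1) = -(b ^ (q - 1))⁻¹} : Finset L) := by
    simpa [hpos.ne'] using hinv.symm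
  rw [hsplit, card_insert_of_notMem hnotMem, card_pow_eq hn hinv]
  simp only [hunit]
  split_ifs <;> omega

theorem hermitianSum_sq [Fintype K] [IsDomain R] (hψ : ψ.IsPrimitive) (hK : Fintype.card K = q)
    (hrank : Even (Module.finrank K L)) (hn : Fintype.card L = (q ^ 2 - 1) * n + 1) {b : L}
    (hb : b ≠ 0) :
    hermitianSum ψ q b ^ 2 =
      Fintype.card L * if b ^ ((q - 1) * n) = (-1) ^ n then (q : R) ^ 2 else 1 := by
  have hneg : hermitianSum ψ q (-b) = hermitianSum ψ q b := by
    simpa using hermitianSum_algebraMap_mul hK hn (neg_ne_zero.2 (one_ne_zero (α := K))) hb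
  calc hermitianSum ψ q b ^ 2
      = hermitianSum ψ q b * hermitianSum ψ q (-b) := by rw [hneg, sq]
    _ = Fintype.card L * #{u : L | b * u + b ^ q * u ^ q ^ 2 = 0} := by
        rw [hermitianSum_mul_hermitianSum_neg hψ hK, card_eq_sum_ones, Nat.cast_sum]
        congr 1
        refine sum_congr rfl fun u hu => ?_
        rw [trace_mul_pow_eq_zero_of_radical hK hrank (mem_filter.1 hu).2,
          AddChar.map_zero_eq_one, Nat.cast_one]
    _ = _ := by
        rw [card_hermitian_radical (hK ▸ Fintype.one_lt_card) hn hb]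
        push_cast
        rfl

end HermitianSum

theorem isIntegral_addChar_apply {A R : Type*} [AddGroup A] [Finite A] [CommRing R]
    (ψ : AddChar A R) (x : A) :
    IsIntegral ℤ (ψ x) := by
  refine .of_pow (Nat.card_pos (α := A)) ?_
  rw [← AddChar.map_nsmul_eq_pow, card_nsmul_eq_zero', AddChar.map_zero_eq_one]
  exact isIntegral_one

section Sign

variable {F : Type*} [Field F] [CharZero F]

-- The opposite sign would make `2 / (q + 1)` an algebraic integer.
theorem eq_neg_pow_of_sq_eq_pow {q : ℕ} (hq : 1 < q) {x : F} (hx : IsIntegral ℤ x) (j : ℕ)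
    (hsq : (1 + (q + 1) * x) ^ 2 = ((q : F) ^ j) ^ 2) : 1 + (q + 1) * x = (-(q : F)) ^ j := by
  obtain ⟨t, ht⟩ : (q + 1 : ℤ) ∣ (-q) ^ j - 1 := by
    rw [← neg_dvd, neg_add']
    exact sub_one_dvd_pow_sub_one _ j
  have htF : (-(q : F)) ^ j = 1 + (q + 1) * t := by
    exact_mod_cast eq_add_of_sub_eq' ht
  have hsign : (1 + (q + 1) * x) ^ 2 = ((-(q : F)) ^ j) ^ 2 := by
    rw [hsq, ← pow_mul, ← pow_mul, Even.neg_pow (even_two.mul_left j)]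
  refine (sq_eq_sq_iff_eq_or_eq_neg.1 hsign).resolve_right fun hwrong => ?_
  have hprod : (q + 1) * (x + t) = -2 := by
    rw [htF] at hwrong
    linear_combination hwrong
  have hq0 : (q + 1 : F) ≠ 0 := Nat.cast_add_one_ne_zero q
  have hrat : x + t = ((-2 / (q + 1) : ℚ) : F) := by
    push_cast
    rw [eq_div_iff hq0, mul_comm, hprod]
  have hint : IsIntegral ℤ (x + t) := hx.add isIntegral_algebraMap
  obtain ⟨m, hm⟩ := hint.exists_int_iff_exists_rat.1 ⟨_, hrat⟩
  have hdvd : (q + 1 : ℤ) ∣ -2 := ⟨m, by rw [hm] at hprod; exact_mod_cast hprod.symm⟩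
  have := Int.le_of_dvd two_pos ((dvd_neg).1 hdvd)
  omega

variable {K L : Type*} [Field K] [Fintype K] [Field L] [Fintype L] [Algebra K L] [DecidableEq L]

theorem hermitianSum_eq_neg_pow {ψ : AddChar K F} (hψ : ψ.IsPrimitive) {q h n : ℕ}
    (hK : Fintype.card K = q) (hL : Fintype.card L = q ^ (2 * h))
    (hn : Fintype.card L = (q ^ 2 - 1) * n + 1) {b : L} (hb : b ≠ 0) :
    hermitianSum ψ q b = (-(q : F)) ^ (if b ^ ((q - 1) * n) = (-1) ^ n then h + 1 else h) := by
  have hq : 1 < q := hK ▸ Fintype.one_lt_card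
  have hrank : Even (Module.finrank K L) := by
    have hcard := Module.card_eq_pow_finrank (K := K) (V := L)
    rw [hL, hK] at hcard
    exact Nat.pow_right_injective hq hcard ▸ even_two_mul h
  have hM := eq_add_one_mul_sub_one_mul hn
  rw [hermitianSum_eq hM hb]
  refine eq_neg_pow_of_sq_eq_pow hq (IsIntegral.sum _ fun z _ => isIntegral_addChar_apply ψ _) _ ?_
  rw [← hermitianSum_eq hM hb, hermitianSum_sq hψ hK hrank hn hb, hL]
  split_ifs <;> push_cast <;> ring

end Sign

section Counting

variable {K : Type*} [Field K] [Fintype K] [DecidableEq K]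

theorem card_mul_card_ne_zero {R X : Type*} [CommRing R] [IsDomain R] [Fintype X]
    {ψ : AddChar K R} (hψ : ψ.IsPrimitive) (f : X → K) {s : R}
    (hs : ∀ c ≠ 0, ∑ x, ψ (c * f x) = s) :
    (Fintype.card K : R) * #{x | f x ≠ 0} = (Fintype.card K - 1) * (Fintype.card X - s) := by
  have hrows : ∑ c, ∑ x, ψ (c * f x) = Fintype.card X + (Fintype.card K - 1) * s := by
    rw [← add_sum_erase _ _ (mem_univ (0 : K)), sum_congr rfl fun c hc => hs c (ne_of_mem_erase hc),
      sum_const, card_erase_of_mem (mem_univ _), card_univ, nsmul_eq_mul,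
      Nat.cast_pred Fintype.card_pos]
    simp
  have hcolumns : ∑ c, ∑ x, ψ (c * f x) = Fintype.card K * #{x | f x = 0} := by
    rw [sum_comm]
    simp_rw [AddChar.sum_mulShift _ hψ]
    push_cast
    rw [← sum_filter, sum_const, nsmul_eq_mul, mul_comm]
  have hcompl : (#{x | f x = 0} : R) + #{x | f x ≠ 0} = Fintype.card X := by
    rw [← Nat.cast_add, card_filter_add_card_filter_not, card_univ]
  linear_combination hcolumns - hrows + (Fintype.card K : R) * hcompl

variable {V : Type*} [Fintype V] [MulAction Kˣ V] {j : ℕ} {T : V → K} {P : V → Prop}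
  [DecidablePred P]

theorem card_fiber_eq_of_map_smul_eq_pow (hj : j.Coprime (Fintype.card K - 1))
    (hT : ∀ (u : Kˣ) x, T (u • x) = u ^ j * T x) (hP : ∀ (u : Kˣ) x, P (u • x) ↔ P x)
    {c c' : K} (hc : c ≠ 0) (hc' : c' ≠ 0) :
    #{x | T x = c' ∧ P x} = #{x | T x = c ∧ P x} := by
  have hcop : (Nat.card Kˣ).Coprime j := by
    rwa [Nat.card_eq_fintype_card, Fintype.card_units, Nat.coprime_comm]
  obtain ⟨u, hu⟩ := (powCoprime hcop).surjective (Units.mk0 c hc / Units.mk0 c' hc')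
  have huc : (u : K) ^ j * c' = c := by
    have := congrArg ((↑) : Kˣ → K) hu
    simpa [eq_div_iff hc'] using this
  refine card_equiv (MulAction.toPerm u) fun x => ?_
  simp [hT, hP, ← huc]

theorem card_sub_one_mul_card_fiber (hj : j.Coprime (Fintype.card K - 1))
    (hT : ∀ (u : Kˣ) x, T (u • x) = u ^ j * T x) (hP : ∀ (u : Kˣ) x, P (u • x) ↔ P x)
    {c : K} (hc : c ≠ 0) :
    (Fintype.card K - 1) * #{x | T x = c ∧ P x} = #{x | T x ≠ 0 ∧ P x} := by
  have hmaps : Set.MapsTo T ({x | T x ≠ 0 ∧ P x} : Finset V) (univ.erase 0 : Finset K) := by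
    intro x hx
    simpa using (mem_filter.1 hx).2.1
  have hfiber : ∀ c' ∈ univ.erase (0 : K), #{x ∈ {x | T x ≠ 0 ∧ P x} | T x = c'} =
      #{x | T x = c ∧ P x} := by
    intro c' hc'
    rw [← card_fiber_eq_of_map_smul_eq_pow hj hT hP hc (ne_of_mem_erase hc'), filter_filter]
    refine congrArg card (filter_congr fun x _ => ?_)
    grind
  rw [card_eq_sum_card_fiberwise hmaps, sum_congr rfl hfiber, sum_const,
    card_erase_of_mem (mem_univ _), card_univ, smul_eq_mul]

end Counting

section TraceCounting

variable {K L : Type*} [Field K] [Fintype K] [Field L] [Fintype L] [Algebra K L] [DecidableEq K]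
  {q h n : ℕ}

theorem card_mul_card_trace_mul_ne_zero {b : L} (hb : b ≠ 0) :
    (Fintype.card K : ℚ) * #{x | Algebra.trace K L (b * x) ≠ 0} =
      (Fintype.card K - 1) * Fintype.card L := by
  classical
  have hψ := AddChar.FiniteField.primitiveChar_to_Complex_isPrimitive K
  have hsum (c : K) (hc : c ≠ 0) :
      ∑ x, AddChar.FiniteField.primitiveChar_to_Complex K (c * Algebra.trace K L (b * x)) = 0 := by
    have hcb : c • b ≠ 0 := smul_ne_zero hc hb
    simpa [mul_comm, hcb] using sum_trace_mul hψ (c • b)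
  have hcount := card_mul_card_ne_zero hψ _ hsum
  rw [sub_zero] at hcount
  exact_mod_cast hcount

theorem card_mul_card_trace_pow_fiber_ne_zero [DecidableEq L] (hK : Fintype.card K = q)
    (hL : Fintype.card L = q ^ (2 * h)) (hn : Fintype.card L = (q ^ 2 - 1) * n + 1)
    {b : L} (hb : b ≠ 0) :
    (q : ℚ) * ((q + 1) * #{z : L | z ^ ((q - 1) * n) = b ^ ((q - 1) * n) ∧
        Algebra.trace K L z ≠ 0}) =
      (q - 1) * (q ^ (2 * h) - (-q) ^ (if b ^ ((q - 1) * n) = (-1) ^ n then h + 1 else h)) := by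
  have hψ := AddChar.FiniteField.primitiveChar_to_Complex_isPrimitive K
  have hsum (c : K) (hc : c ≠ 0) :
      ∑ x, AddChar.FiniteField.primitiveChar_to_Complex K
          (c * Algebra.trace K L (b * x ^ (q + 1))) =
        (-(q : ℂ)) ^ (if b ^ ((q - 1) * n) = (-1) ^ n then h + 1 else h) := by
    rw [← hermitianSum_eq_neg_pow hψ hK hL hn hb, ← hermitianSum_algebraMap_mul hK hn hc hb]
    simp only [hermitianSum, ← Algebra.smul_def, smul_mul_assoc, map_smul, smul_eq_mul]
  have hfiber : #{x | Algebra.trace K L (b * x ^ (q + 1)) ≠ 0} =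
      (q + 1) * #{z : L | z ^ ((q - 1) * n) = b ^ ((q - 1) * n) ∧ Algebra.trace K L z ≠ 0} := by
    have hpow := sum_comp_mul_pow (eq_add_one_mul_sub_one_mul hn) hb
      fun z => if Algebra.trace K L z ≠ 0 then 1 else 0
    simpa [sum_ite, filter_filter] using hpow
  have hcount := card_mul_card_ne_zero hψ _ hsum
  rw [hfiber, hK, hL] at hcount
  exact_mod_cast hcount

end TraceCounting

section TraceNorm

variable {K E L : Type*} [Field K] [Field E] [Field L] [Algebra K E] [Algebra E L]
  {q h n : ℕ}

theorem trace_norm_smul [Algebra K L] [IsScalarTower K E L] (c : K) (x : L) :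
    Algebra.trace K E (Algebra.norm E (c • x)) =
      c ^ Module.finrank E L * Algebra.trace K E (Algebra.norm E x) := by
  rw [← algebraMap_smul E c x, Algebra.smul_def, map_mul, Algebra.norm_algebraMap, ← map_pow,
    ← Algebra.smul_def, map_smul, smul_eq_mul]

variable [Fintype K] [Fintype E]

theorem trace_eq_zero_iff_of_card_eq_sq (hK : Fintype.card K = q) (hE : Fintype.card E = q ^ 2)
    (y : E) : Algebra.trace K E y = 0 ↔ y = 0 ∨ y ^ (q - 1) = -1 := by
  have hq : 1 < q := hK ▸ Fintype.one_lt_card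
  have hrank : Module.finrank K E = 2 := by
    have hcard := Module.card_eq_pow_finrank (K := K) (V := E)
    rw [hE, hK] at hcard
    exact (Nat.pow_right_injective hq hcard).symm
  have htrace : algebraMap K E (Algebra.trace K E y) = y * (1 + y ^ (q - 1)) := by
    rw [FiniteField.algebraMap_trace_eq_sum_pow, hrank, Nat.card_eq_fintype_card, hK,
      sum_range_succ, sum_range_one, pow_zero, pow_one, pow_one, mul_add, mul_one,
      mul_pow_sub_one (Nat.ne_zero_of_lt hq)]
  rw [← map_eq_zero (algebraMap K E), htrace, mul_eq_zero, add_eq_zero_iff_neg_eq,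
    eq_comm (a := -1)]

theorem trace_norm_eq_zero_iff [Fintype L] (hK : Fintype.card K = q) (hE : Fintype.card E = q ^ 2)
    (hn : Fintype.card L = (q ^ 2 - 1) * n + 1) (x : L) :
    Algebra.trace K E (Algebra.norm E x) = 0 ↔ x = 0 ∨ x ^ ((q - 1) * n) = -1 := by
  have hq : 1 < q := hK ▸ Fintype.one_lt_card
  have hpos : 0 < q ^ 2 - 1 := Nat.sub_pos_of_lt (Nat.one_lt_pow two_ne_zero hq)
  have hnorm : algebraMap E L (Algebra.norm E x) = x ^ n := by
    rw [FiniteField.algebraMap_norm_eq_pow, Nat.card_eq_fintype_card, Nat.card_eq_fintype_card, hE,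
      hn, Nat.add_sub_cancel, Nat.mul_div_cancel_left n hpos]
  rw [trace_eq_zero_iff_of_card_eq_sq hK hE, Algebra.norm_eq_zero_iff,
    ← (algebraMap E L).injective.eq_iff (b := -1), map_pow, hnorm, ← pow_mul, map_neg, map_one,
    mul_comm n]

theorem card_trace_norm_eq_zero [Fintype L] [DecidableEq K] [Algebra K L] (hK : Fintype.card K = q)
    (hE : Fintype.card E = q ^ 2) (hn : Fintype.card L = (q ^ 2 - 1) * n + 1) :
    #{x : L | Algebra.trace K E (Algebra.norm E x) = 0} = (q - 1) * n + 1 := by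
  classical
  have hM := sub_one_mul_ne_zero hn
  have hsplit : ({x : L | Algebra.trace K E (Algebra.norm E x) = 0} : Finset L) =
      insert 0 ({x : L | x ^ ((q - 1) * n) = (-1) ^ 1} : Finset L) := by
    ext x
    simp [trace_norm_eq_zero_iff hK hE hn]
  rw [hsplit, card_insert_of_notMem (by simp [hM]), card_pow_eq_neg_one_pow hK hn]

theorem card_mul_card_trace_norm_eq_zero [Fintype L] [Algebra K L] [DecidableEq K] [DecidableEq L]
    (hK : Fintype.card K = q) (hE : Fintype.card E = q ^ 2) (hL : Fintype.card L = q ^ (2 * h))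
    (hn : Fintype.card L = (q ^ 2 - 1) * n + 1) {b : L} (hb : b ≠ 0) :
    (q : ℚ) * ((q + 1) * #{x : L | Algebra.trace K E (Algebra.norm E x) = 0 ∧
        Algebra.trace K L (b * x) ≠ 0}) =
      (q - 1) *
        (q ^ (2 * h) - (-q) ^ (if b ^ ((q - 1) * n) = (-1) ^ (n + 1) then h + 1 else h)) := by
  have hM := sub_one_mul_ne_zero hn
  obtain ⟨γ, hγ⟩ : ∃ γ : L, γ ^ ((q - 1) * n) = -1 := by
    have hroots := card_pow_eq_neg_one_pow hK hn 1
    obtain ⟨γ, hγ⟩ := card_pos.1 (hroots.symm ▸ Nat.pos_of_ne_zero hM)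
    exact ⟨γ, by simpa using hγ⟩
  have hγ0 : γ ≠ 0 := by
    rintro rfl
    simp [hM] at hγ
  have hscale : (b * γ) ^ ((q - 1) * n) = -b ^ ((q - 1) * n) := by rw [mul_pow, hγ, mul_neg_one]
  have hfiber : #{x : L | Algebra.trace K E (Algebra.norm E x) = 0 ∧
        Algebra.trace K L (b * x) ≠ 0} =
      #{z : L | z ^ ((q - 1) * n) = (b * γ) ^ ((q - 1) * n) ∧ Algebra.trace K L z ≠ 0} := by
    refine card_equiv (Equiv.mulLeft₀ b hb) fun x => ?_
    rcases eq_or_ne x 0 with rfl | hx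
    · simp
    · have hcancel : b ^ ((q - 1) * n) * x ^ ((q - 1) * n) = -b ^ ((q - 1) * n) ↔
          x ^ ((q - 1) * n) = -1 := by
        rw [← mul_neg_one, mul_right_inj' (pow_ne_zero _ hb)]
      simp [trace_norm_eq_zero_iff hK hE hn, hx, mul_pow, hγ, hcancel]
  rw [hfiber, card_mul_card_trace_pow_fiber_ne_zero hK hL hn (mul_ne_zero hb hγ0), hscale]
  simp only [pow_succ, mul_neg_one, neg_eq_iff_eq_neg]

end TraceNorm

theorem ne_zero_of_card_eq_pow {F : Type*} [Fintype F] [Nontrivial F] {q h : ℕ}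
    (hF : Fintype.card F = q ^ (2 * h)) : h ≠ 0 := by
  rintro rfl
  exact Fintype.one_lt_card.ne' hF

theorem neg_pow_le_pow_two_mul_half {q j h : ℕ} (hq : 1 ≤ q) (hj : j ≤ h) :
    (-q : ℚ) ^ j ≤ q ^ (2 * (h / 2)) := by
  rcases j.even_or_odd with hj' | hj'
  · obtain ⟨i, rfl⟩ := hj'.two_dvd
    rw [hj'.neg_pow]
    exact pow_le_pow_right₀ (by exact_mod_cast hq) (by omega)
  · rw [hj'.neg_pow]
    exact (neg_nonpos.2 (by positivity)).trans (by positivity)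

theorem neg_pow_ne_neg_pow_sub_one {q h : ℕ} (hq : 0 < q) (hh : h ≠ 0) :
    (-q : ℚ) ^ h ≠ (-q) ^ (h - 1) := by
  rw [← mul_pow_sub_one hh]
  refine (mul_eq_right₀ (pow_ne_zero _ (by simpa using hq.ne'))).not.2 fun hone => ?_
  have : (0 : ℚ) < q := by exact_mod_cast hq
  linarith

section Code

variable {K E L : Type*} [Field K] [Field E] [Field L] [Algebra K E] [Algebra E L] [Algebra K L]

variable (K E L) in
/-- The defining set `D = {x ∈ L : Tr (N x) + a = 0}` of the code, where `N` is the norm from `L`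
to `E` and `Tr` the trace from `E` to `K`; for finite fields with `q ^ k`, `q ^ 2` and `q` elements,
`N x = x ^ ((q ^ k - 1) / (q ^ 2 - 1))`. -/
def definingSet (a : K) : Set L :=
  {x | Algebra.trace K E (Algebra.norm E x) + a = 0}

variable (K) in
/-- The Hamming weight of the codeword `(Tr (b * d))_{d ∈ D}` of the code over `K` with
defining set `D`. -/
noncomputable def codewordWeight (D : Set L) (b : L) : ℕ :=
  Nat.card {d : L // d ∈ D ∧ Algebra.trace K L (b * d) ≠ 0}

theorem injective_codeword {D : Set L} (hD : ∀ b ≠ 0, codewordWeight K D b ≠ 0) :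
    Function.Injective fun (b : L) (d : D) => Algebra.trace K L (b * d) := by
  intro b c hbc
  by_contra hne
  refine hD (b - c) (sub_ne_zero.2 hne) ?_
  have : IsEmpty {d : L // d ∈ D ∧ Algebra.trace K L ((b - c) * d) ≠ 0} := by
    refine ⟨fun ⟨d, hd, hd'⟩ => hd' ?_⟩
    rw [sub_mul, map_sub, sub_eq_zero]
    exact congr_fun hbc ⟨d, hd⟩
  exact Nat.card_of_isEmpty

variable [Fintype K] [Fintype E] [Fintype L] [IsScalarTower K E L] {q h n : ℕ} {a : K}

theorem card_sub_one_mul_card_definingSet_inter [DecidableEq K] (hK : Fintype.card K = q)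
    (hE : Fintype.card E = q ^ 2) (hL : Fintype.card L = q ^ (2 * h)) (hcop : h.Coprime (q - 1))
    (ha : a ≠ 0) {P : L → Prop} [DecidablePred P] (hP : ∀ (u : Kˣ) x, P (u • x) ↔ P x) :
    (q - 1) * Nat.card {x : L // x ∈ definingSet K E L a ∧ P x} =
      #{x : L | Algebra.trace K E (Algebra.norm E x) ≠ 0 ∧ P x} := by
  have hq : 1 < q := hK ▸ Fintype.one_lt_card
  have hrank : Module.finrank E L = h := by
    have hcard := Module.card_eq_pow_finrank (K := E) (V := L)
    rw [hL, hE, ← pow_mul] at hcard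
    exact (Nat.mul_left_cancel two_pos (Nat.pow_right_injective hq hcard)).symm
  have hscale (u : Kˣ) (x : L) : Algebra.trace K E (Algebra.norm E (u • x)) =
      u ^ h * Algebra.trace K E (Algebra.norm E x) := by
    rw [Units.smul_def, trace_norm_smul, hrank]
  have hcard := card_sub_one_mul_card_fiber (hK ▸ hcop)
    (T := fun x : L => Algebra.trace K E (Algebra.norm E x)) hscale hP (neg_ne_zero.2 ha)
  simp only [hK, eq_neg_iff_add_eq_zero] at hcard
  rw [← hcard, ← Fintype.card_subtype, ← Nat.card_eq_fintype_card]
  rfl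

theorem card_definingSet (hK : Fintype.card K = q) (hE : Fintype.card E = q ^ 2)
    (hL : Fintype.card L = q ^ (2 * h)) (hn : Fintype.card L = (q ^ 2 - 1) * n + 1)
    (hcop : h.Coprime (q - 1)) (ha : a ≠ 0) : Nat.card (definingSet K E L a) = q * n := by
  classical
  have hq : 1 < q := hK ▸ Fintype.one_lt_card
  have hinter := card_sub_one_mul_card_definingSet_inter hK hE hL hcop ha (P := fun _ => True)
    fun _ _ => Iff.rfl
  have hcompl := card_filter_add_card_filter_not (s := univ)
    fun x : L => Algebra.trace K E (Algebra.norm E x) = 0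
  rw [card_trace_norm_eq_zero hK hE hn, card_univ, eq_add_one_mul_sub_one_mul hn] at hcompl
  simp only [and_true] at hinter
  refine Nat.eq_of_mul_eq_mul_left (Nat.sub_pos_of_lt hq) (hinter.trans ?_)
  linarith

theorem codewordWeight_eq (hK : Fintype.card K = q) (hE : Fintype.card E = q ^ 2)
    (hL : Fintype.card L = q ^ (2 * h)) (hn : Fintype.card L = (q ^ 2 - 1) * n + 1)
    (hcop : h.Coprime (q - 1)) (ha : a ≠ 0) [DecidableEq L] {b : L} (hb : b ≠ 0) :
    (codewordWeight K (definingSet K E L a) b : ℚ) =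
      (q ^ (2 * h) - (-q) ^ (if b ^ ((q - 1) * n) = (-1) ^ (n + 1) then h else h - 1)) /
        (q + 1) := by
  classical
  have hq : 1 < q := hK ▸ Fintype.one_lt_card
  have hq0 : (q : ℚ) ≠ 0 := by positivity
  have hq1 : (q : ℚ) - 1 ≠ 0 := sub_ne_zero.2 (by exact_mod_cast hq.ne')
  have hscale (u : Kˣ) (x : L) :
      Algebra.trace K L (b * u • x) ≠ 0 ↔ Algebra.trace K L (b * x) ≠ 0 := by
    simp [Units.smul_def]
  have hD : ((q : ℚ) - 1) * codewordWeight K (definingSet K E L a) b =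
      #{x : L | Algebra.trace K E (Algebra.norm E x) ≠ 0 ∧ Algebra.trace K L (b * x) ≠ 0} := by
    rw [← Nat.cast_pred (by omega),
      ← card_sub_one_mul_card_definingSet_inter hK hE hL hcop ha hscale, Nat.cast_mul,
      codewordWeight]
  have hsplit : (#{x : L | Algebra.trace K E (Algebra.norm E x) = 0 ∧
        Algebra.trace K L (b * x) ≠ 0} : ℚ) +
      #{x : L | Algebra.trace K E (Algebra.norm E x) ≠ 0 ∧ Algebra.trace K L (b * x) ≠ 0} =
      #{x : L | Algebra.trace K L (b * x) ≠ 0} := by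
    rw [← Nat.cast_add,
      ← card_filter_add_card_filter_not (s := {x | Algebra.trace K L (b * x) ≠ 0})
        fun x => Algebra.trace K E (Algebra.norm E x) = 0, filter_filter, filter_filter]
    simp only [and_comm, ne_eq]
  have htrace := card_mul_card_trace_mul_ne_zero (K := K) hb
  have hzero := card_mul_card_trace_norm_eq_zero hK hE hL hn hb
  have hsign : (-q : ℚ) ^ (if b ^ ((q - 1) * n) = (-1) ^ (n + 1) then h + 1 else h) =
      -q * (-q) ^ (if b ^ ((q - 1) * n) = (-1) ^ (n + 1) then h else h - 1) := by
    split_ifs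
    · exact pow_succ' _ _
    · exact (mul_pow_sub_one (ne_zero_of_card_eq_pow hL) _).symm
  rw [hsign] at hzero
  rw [hK, hL] at htrace
  push_cast at htrace
  rw [eq_div_iff (by positivity)]
  refine mul_left_cancel₀ (mul_ne_zero hq0 hq1) ?_
  linear_combination q * (q + 1) * hD + q * (q + 1) * hsplit + (q + 1) * htrace - hzero

-- `2 * (h / 2)` is the even one of `h` and `h - 1`, so the bound is the smaller of the two weights.
theorem le_codewordWeight (hK : Fintype.card K = q) (hE : Fintype.card E = q ^ 2)
    (hL : Fintype.card L = q ^ (2 * h)) (hn : Fintype.card L = (q ^ 2 - 1) * n + 1)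
    (hcop : h.Coprime (q - 1)) (ha : a ≠ 0) {b : L} (hb : b ≠ 0) :
    ((q : ℚ) ^ (2 * h) - q ^ (2 * (h / 2))) / (q + 1) ≤
      codewordWeight K (definingSet K E L a) b := by
  classical
  have hq : 1 ≤ q := hK ▸ Fintype.card_pos
  rw [codewordWeight_eq hK hE hL hn hcop ha hb]
  have := neg_pow_le_pow_two_mul_half hq
    (show (if b ^ ((q - 1) * n) = (-1) ^ (n + 1) then h else h - 1) ≤ h by split_ifs <;> omega)
  gcongr

theorem codewordWeight_ne_zero (hK : Fintype.card K = q) (hE : Fintype.card E = q ^ 2)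
    (hL : Fintype.card L = q ^ (2 * h)) (hn : Fintype.card L = (q ^ 2 - 1) * n + 1)
    (hcop : h.Coprime (q - 1)) (ha : a ≠ 0) {b : L} (hb : b ≠ 0) :
    codewordWeight K (definingSet K E L a) b ≠ 0 := by
  have hh := ne_zero_of_card_eq_pow hL
  have hq : (1 : ℚ) < q := by exact_mod_cast hK ▸ Fintype.one_lt_card
  have hlt : (q : ℚ) ^ (2 * (h / 2)) < q ^ (2 * h) := pow_lt_pow_right₀ hq (by omega)
  have hpos := (div_pos (sub_pos.2 hlt) (by positivity)).trans_le
    (le_codewordWeight hK hE hL hn hcop ha hb)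
  exact_mod_cast hpos.ne'

theorem codewordWeight_eq_iff (hK : Fintype.card K = q) (hE : Fintype.card E = q ^ 2)
    (hL : Fintype.card L = q ^ (2 * h)) (hn : Fintype.card L = (q ^ 2 - 1) * n + 1)
    (hcop : h.Coprime (q - 1)) (ha : a ≠ 0) {b : L} (hb : b ≠ 0) :
    (codewordWeight K (definingSet K E L a) b : ℚ) = (q ^ (2 * h) - (-q) ^ h) / (q + 1) ↔
      b ^ ((q - 1) * n) = (-1) ^ (n + 1) := by
  classical
  have hne := neg_pow_ne_neg_pow_sub_one (hK ▸ Fintype.card_pos) (ne_zero_of_card_eq_pow hL)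
  have hq : (q + 1 : ℚ) ≠ 0 := by positivity
  rw [codewordWeight_eq hK hE hL hn hcop ha hb, div_left_inj' hq, sub_right_inj]
  split_ifs with hcase
  · simp [hcase]
  · simp [hcase, hne.symm]

theorem codewordWeight_eq_or_eq (hK : Fintype.card K = q) (hE : Fintype.card E = q ^ 2)
    (hL : Fintype.card L = q ^ (2 * h)) (hn : Fintype.card L = (q ^ 2 - 1) * n + 1)
    (hcop : h.Coprime (q - 1)) (ha : a ≠ 0) {b : L} (hb : b ≠ 0) :
    (codewordWeight K (definingSet K E L a) b : ℚ) = (q ^ (2 * h) - (-q) ^ h) / (q + 1) ∨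
      (codewordWeight K (definingSet K E L a) b : ℚ) =
        (q ^ (2 * h) - (-q) ^ (h - 1)) / (q + 1) := by
  classical
  rw [codewordWeight_eq hK hE hL hn hcop ha hb]
  split_ifs <;> simp

theorem card_codewordWeight_eq_neg_pow (hK : Fintype.card K = q) (hE : Fintype.card E = q ^ 2)
    (hL : Fintype.card L = q ^ (2 * h)) (hn : Fintype.card L = (q ^ 2 - 1) * n + 1)
    (hcop : h.Coprime (q - 1)) (ha : a ≠ 0) :
    Nat.card {b : L // b ≠ 0 ∧ (codewordWeight K (definingSet K E L a) b : ℚ) =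
      (q ^ (2 * h) - (-q) ^ h) / (q + 1)} = (q - 1) * n := by
  classical
  rw [← card_pow_eq_neg_one_pow hK hn (n + 1), Nat.card_eq_fintype_card, Fintype.card_subtype]
  congr 1 with b
  simp only [mem_filter, mem_univ, true_and]
  rcases eq_or_ne b 0 with rfl | hb
  · simp [sub_one_mul_ne_zero hn, eq_comm (a := (0 : L))]
  · rw [codewordWeight_eq_iff hK hE hL hn hcop ha hb, and_iff_right hb]

theorem card_codewordWeight_eq_neg_pow_sub_one (hK : Fintype.card K = q)
    (hE : Fintype.card E = q ^ 2) (hL : Fintype.card L = q ^ (2 * h))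
    (hn : Fintype.card L = (q ^ 2 - 1) * n + 1) (hcop : h.Coprime (q - 1)) (ha : a ≠ 0) :
    Nat.card {b : L // b ≠ 0 ∧ (codewordWeight K (definingSet K E L a) b : ℚ) =
      (q ^ (2 * h) - (-q) ^ (h - 1)) / (q + 1)} = q * ((q - 1) * n) := by
  classical
  have hne := neg_pow_ne_neg_pow_sub_one (hK ▸ Fintype.card_pos) (ne_zero_of_card_eq_pow hL)
  have hq : (q + 1 : ℚ) ≠ 0 := by positivity
  have hfirst := card_codewordWeight_eq_neg_pow hK hE hL hn hcop ha
  have hcompl := card_filter_add_card_filter_not (s := univ.erase (0 : L)) fun b =>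
    (codewordWeight K (definingSet K E L a) b : ℚ) = (q ^ (2 * h) - (-q) ^ h) / (q + 1)
  have hnot : {b ∈ univ.erase (0 : L) | ¬(codewordWeight K (definingSet K E L a) b : ℚ) =
        (q ^ (2 * h) - (-q) ^ h) / (q + 1)} =
      ({b | b ≠ 0 ∧ (codewordWeight K (definingSet K E L a) b : ℚ) =
        (q ^ (2 * h) - (-q) ^ (h - 1)) / (q + 1)} : Finset L) := by
    ext b
    simp only [mem_filter, mem_erase, mem_univ, and_true, true_and]
    refine and_congr_right fun hb => ⟨fun hneq => ?_, fun heq => ?_⟩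
    · exact (codewordWeight_eq_or_eq hK hE hL hn hcop ha hb).resolve_left hneq
    · rw [heq, div_left_inj' hq, sub_right_inj]
      exact hne.symm
  rw [Nat.card_eq_fintype_card, Fintype.card_subtype] at hfirst ⊢
  rw [hnot, ← filter_ne', filter_filter, hfirst, filter_ne', card_erase_of_mem (mem_univ _),
    card_univ, eq_add_one_mul_sub_one_mul hn, Nat.add_sub_cancel, add_mul, one_mul] at hcompl
  omega

end Code

theorem stmt16_general {q h : ℕ} {K E L : Type*} [Field K] [Field E] [Field L]
    [Fintype K] [Fintype E] [Fintype L] [Algebra K E] [Algebra E L] [Algebra K L]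
    [IsScalarTower K E L] (hK : Fintype.card K = q) (hE : Fintype.card E = q ^ 2)
    (hL : Fintype.card L = q ^ (2 * h)) (hcop : h.Coprime (q - 1)) {a : K} (ha : a ≠ 0) :
    (Nat.card {b : L // b ≠ 0 ∧ (codewordWeight K (definingSet K E L a) b : ℚ) =
        (q ^ (2 * h) - (-q) ^ h) / (q + 1)} : ℚ) = (q ^ (2 * h) - 1) / (q + 1) ∧
    (Nat.card {b : L // b ≠ 0 ∧ (codewordWeight K (definingSet K E L a) b : ℚ) =
        (q ^ (2 * h) - (-q) ^ (h - 1)) / (q + 1)} : ℚ) = q * (q ^ (2 * h) - 1) / (q + 1) ∧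
    (∀ b : L, b ≠ 0 →
      (codewordWeight K (definingSet K E L a) b : ℚ) = (q ^ (2 * h) - (-q) ^ h) / (q + 1) ∨
      (codewordWeight K (definingSet K E L a) b : ℚ) =
        (q ^ (2 * h) - (-q) ^ (h - 1)) / (q + 1)) ∧
    (Nat.card (definingSet K E L a) : ℚ) = q * (q ^ (2 * h) - 1) / (q ^ 2 - 1) ∧
    Function.Injective (fun (b : L) (d : definingSet K E L a) => Algebra.trace K L (b * d)) ∧
    (∀ b : L, b ≠ 0 → ((q : ℚ) ^ (2 * h) - q ^ (2 * (h / 2))) / (q + 1) ≤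
      codewordWeight K (definingSet K E L a) b) := by
  have hq : 1 < q := hK ▸ Fintype.one_lt_card
  have hq2 : (q : ℚ) ^ 2 - 1 ≠ 0 :=
    sub_ne_zero.2 (by exact_mod_cast (Nat.one_lt_pow two_ne_zero hq).ne')
  obtain ⟨n, hn⟩ : ∃ n, Fintype.card L = (q ^ 2 - 1) * n + 1 := by
    obtain ⟨n, hn⟩ := Nat.pow_sub_one_dvd_pow_sub_one q (Dvd.intro h rfl : 2 ∣ 2 * h)
    exact ⟨n, hL ▸ Nat.eq_add_of_sub_eq (Nat.one_le_pow _ _ (by omega)) hn⟩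
  have hcard : (q : ℚ) ^ (2 * h) - 1 = (q ^ 2 - 1) * n := by
    have := congrArg (Nat.cast : ℕ → ℚ) (hL.symm.trans hn)
    rw [Nat.cast_add, Nat.cast_mul, Nat.cast_pred (by positivity)] at this
    push_cast at this
    linear_combination this
  have hfactor : (q : ℚ) ^ (2 * h) - 1 = (q + 1) * ((q - 1) * n) := by
    rw [hcard]
    ring
  have hcast : (((q - 1) * n : ℕ) : ℚ) = (q - 1) * n := by
    rw [Nat.cast_mul, Nat.cast_pred (by omega)]
  refine ⟨?_, ?_, fun b => codewordWeight_eq_or_eq hK hE hL hn hcop ha, ?_,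
    injective_codeword fun b => codewordWeight_ne_zero hK hE hL hn hcop ha,
    fun b => le_codewordWeight hK hE hL hn hcop ha⟩
  · rw [card_codewordWeight_eq_neg_pow hK hE hL hn hcop ha, hcast, hfactor,
      mul_div_cancel_left₀ _ (by positivity)]
  · rw [card_codewordWeight_eq_neg_pow_sub_one hK hE hL hn hcop ha, Nat.cast_mul, hcast, hfactor,
      mul_left_comm (q : ℚ) (q + 1), mul_div_cancel_left₀ _ (by positivity)]
  · rw [card_definingSet hK hE hL hn hcop ha, Nat.cast_mul, hcard, mul_left_comm,
      mul_div_cancel_left₀ _ hq2]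

/-- **Theorem 2, `f = 2`, `k ≡ 0 (mod 4)`.** Let `q` be a power of a prime
`p`, `k ≡ 0 (mod 4)`, `k > 0`, `gcd(k/2, q-1) = 1`, `a ∈ F_qˣ`, and
`D = {x ∈ F_{q^k} : Tr_{q²/q}(x^{(q^k-1)/(q²-1)}) + a = 0}`.  Then exactly
`(q^k-1)/(q+1)` nonzero `b` give weight `(q^k - q^{k/2})/(q+1)` and exactly
`q(q^k-1)/(q+1)` give weight `(q^k + q^{k/2-1})/(q+1)`; every nonzero codeword has one of
these two weights, `C_D` has length `q(q^k-1)/(q²-1)`, dimension `k`, and minimum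
distance `(q^k - q^{k/2})/(q+1)`. -/
theorem stmt16 (p e q k : ℕ) [Fact p.Prime] (he : 0 < e) (hq : q = p ^ e)
    (hk : 0 < k) (hk4 : k % 4 = 0) (hgcd : Nat.gcd (k / 2) (q - 1) = 1)
    (Fq Ff Fk : Type) [Field Fq] [Field Ff] [Field Fk]
    [Fintype Fq] [Fintype Ff] [Fintype Fk]
    [Algebra Fq Ff] [Algebra Ff Fk] [Algebra Fq Fk] [IsScalarTower Fq Ff Fk]
    (hcq : Fintype.card Fq = q) (hcf : Fintype.card Ff = q ^ 2)
    (hck : Fintype.card Fk = q ^ k)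
    (hnorm : ∀ x : Fk,
      algebraMap Ff Fk (Algebra.norm Ff x) = x ^ ((q ^ k - 1) / (q ^ 2 - 1)))
    (a : Fq) (ha : a ≠ 0) :
    (Nat.card {b : Fk // b ≠ 0 ∧
        (Nat.card {d : Fk // Algebra.trace Fq Ff (Algebra.norm Ff d) + a = 0 ∧
            Algebra.trace Fq Fk (b * d) ≠ 0} : ℚ)
          = ((q : ℚ) ^ k - (q : ℚ) ^ (k / 2)) / ((q : ℚ) + 1)} : ℚ)
      = ((q : ℚ) ^ k - 1) / ((q : ℚ) + 1) ∧
    (Nat.card {b : Fk // b ≠ 0 ∧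
        (Nat.card {d : Fk // Algebra.trace Fq Ff (Algebra.norm Ff d) + a = 0 ∧
            Algebra.trace Fq Fk (b * d) ≠ 0} : ℚ)
          = ((q : ℚ) ^ k + (q : ℚ) ^ (k / 2 - 1)) / ((q : ℚ) + 1)} : ℚ)
      = (q : ℚ) * ((q : ℚ) ^ k - 1) / ((q : ℚ) + 1) ∧
    (∀ b : Fk, b ≠ 0 →
      (Nat.card {d : Fk // Algebra.trace Fq Ff (Algebra.norm Ff d) + a = 0 ∧
          Algebra.trace Fq Fk (b * d) ≠ 0} : ℚ)
          = ((q : ℚ) ^ k - (q : ℚ) ^ (k / 2)) / ((q : ℚ) + 1) ∨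
      (Nat.card {d : Fk // Algebra.trace Fq Ff (Algebra.norm Ff d) + a = 0 ∧
          Algebra.trace Fq Fk (b * d) ≠ 0} : ℚ)
          = ((q : ℚ) ^ k + (q : ℚ) ^ (k / 2 - 1)) / ((q : ℚ) + 1)) ∧
    (Nat.card {x : Fk // Algebra.trace Fq Ff (Algebra.norm Ff x) + a = 0} : ℚ)
      = (q : ℚ) * ((q : ℚ) ^ k - 1) / ((q : ℚ) ^ 2 - 1) ∧
    Function.Injective
      (fun (b : Fk)
          (d : {x : Fk // Algebra.trace Fq Ff (Algebra.norm Ff x) + a = 0}) =>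
        Algebra.trace Fq Fk (b * (d : Fk))) ∧
    (∀ b : Fk, b ≠ 0 →
      ((q : ℚ) ^ k - (q : ℚ) ^ (k / 2)) / ((q : ℚ) + 1)
        ≤ (Nat.card {d : Fk // Algebra.trace Fq Ff (Algebra.norm Ff d) + a = 0 ∧
            Algebra.trace Fq Fk (b * d) ≠ 0} : ℚ)) := by
  obtain ⟨m, rfl⟩ : ∃ m, k = 2 * (2 * m) := ⟨k / 4, by omega⟩
  rw [Nat.mul_div_cancel_left _ two_pos] at hgcd ⊢
  have hodd : Odd (2 * m - 1) := ⟨m - 1, by omega⟩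
  have hgen := stmt16_general hcq hcf hck hgcd ha
  rw [(even_two_mul m).neg_pow, hodd.neg_pow, Nat.mul_div_cancel_left _ two_pos,
    sub_neg_eq_add] at hgen
  exact hgen
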